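/- arXiv:1102.4088 — 3 statements merged into one kernel-verified Lean document; each statement's English description precedes it below -/
import Mathlib

section
/- Let Γ be an abelian group and A a Γ-graded ring with degree-zero subring A_0. Then A_0 has the invariant basis number property (i.e., A_0^m ≅ A_0^n as A_0-modules implies m = n) if and only if A has invariant basis number in the graded sense, i.e., for all natural numbers m and n, the existence of a graded right A-module isomorphism A^m ≅ A^n (where A^k carries the grading (A^k)_γ = (A_γ)^k) implies m = n. -/
/-!
For a Γ-graded ring A: the degree-zero subring A_0 has the invariant basis
number property iff A has invariant basis number in the graded sense, i.e.
a graded right A-module isomorphism A^m ≅ A^n (trivial shifts) forces m = n.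
-/

/-- A graded isomorphism `A^m(ᾱ) ≅ A^n(δ̄)` of shifted graded free *right*
`A`-modules. -/
def GradedRightFreeIso {Γ : Type*} [AddCommGroup Γ] {A : Type*} [Ring A]
    (𝒜 : Γ → AddSubgroup A) {m n : ℕ} (α : Fin m → Γ) (δ : Fin n → Γ) : Prop :=
  ∃ φ : (Fin m → A) ≃+ (Fin n → A),
    (∀ (v : Fin m → A) (a : A), φ (fun i => v i * a) = fun j => φ v j * a) ∧
    ∀ (γ : Γ) (v : Fin m → A), (∀ i, v i ∈ 𝒜 (γ + α i)) ↔ ∀ j, φ v j ∈ 𝒜 (γ + δ j)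

/-- An isomorphism of free right modules `R^m ≅ R^n` over a ring `R`:
an additive bijection commuting with the (componentwise) right `R`-action. -/
def RightFreeModuleIso (R : Type*) [Ring R] (m n : ℕ) : Prop :=
  ∃ φ : (Fin m → R) ≃+ (Fin n → R),
    ∀ (v : Fin m → R) (c : R), φ (fun i => v i * c) = fun j => φ v j * c

/-!
A graded isomorphism between shifted graded free right modules is left multiplication by an
invertible matrix whose `(j, i)` entry, like that of its inverse up to swapping the shifts, is
homogeneous of degree `δ j - α i`. When all shifts agree these degrees vanish, so the two mutually
inverse matrices live over the degree-zero subring, where they amount to an isomorphism of free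
modules over that subring.
-/

section MatrixOfRightLinear

open Matrix

variable {m n R : Type*}

theorem symm_map_mul_right [Mul R] [Add R] {φ : (m → R) ≃+ (n → R)}
    (hφ : ∀ (v : m → R) (c : R), φ (fun i => v i * c) = fun j => φ v j * c)
    (w : n → R) (c : R) : φ.symm (fun j => w j * c) = fun i => φ.symm w i * c := by
  rw [AddEquiv.symm_apply_eq, hφ, AddEquiv.apply_symm_apply]

theorem map_eq_mulVec_of_map_mul_right [NonAssocSemiring R] [Fintype m] [DecidableEq m]
    {φ : (m → R) →+ (n → R)}
    (hφ : ∀ (v : m → R) (c : R), φ (fun i => v i * c) = fun j => φ v j * c) (v : m → R) :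
    φ v = Matrix.of (fun j i => φ (Pi.single i 1) j) *ᵥ v := by
  have hv : v = ∑ i, fun k => (Pi.single i 1 : m → R) k * v i := by
    ext k
    simp [Finset.sum_apply, Pi.single_apply]
  calc φ v = ∑ i, φ (fun k => (Pi.single i 1 : m → R) k * v i) := by rw [← map_sum, ← hv]
    _ = ∑ i, fun j => φ (Pi.single i 1) j * v i := by simp only [hφ]
    _ = Matrix.of (fun j i => φ (Pi.single i 1) j) *ᵥ v := by
      ext j
      simp [Finset.sum_apply, mulVec, dotProduct]

variable [Semiring R] [Fintype m] [Fintype n] [DecidableEq m]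

theorem mul_eq_one_of_leftInverse_mulVec {M : Matrix n m R} {N : Matrix m n R}
    (h : Function.LeftInverse N.mulVec M.mulVec) : N * M = 1 :=
  ext_of_mulVec_single fun i => by rw [← mulVec_mulVec, h, one_mulVec]

variable [DecidableEq n]

theorem exists_matrix_of_map_mul_right {φ : (m → R) ≃+ (n → R)}
    (hφ : ∀ (v : m → R) (c : R), φ (fun i => v i * c) = fun j => φ v j * c) :
    ∃ (M : Matrix n m R) (N : Matrix m n R),
      (∀ v, φ v = M *ᵥ v) ∧ (∀ w, φ.symm w = N *ᵥ w) ∧ N * M = 1 ∧ M * N = 1 := by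
  obtain ⟨M, hM⟩ : ∃ M : Matrix n m R, ∀ v, φ v = M *ᵥ v :=
    ⟨_, map_eq_mulVec_of_map_mul_right (φ := φ.toAddMonoidHom) hφ⟩
  obtain ⟨N, hN⟩ : ∃ N : Matrix m n R, ∀ w, φ.symm w = N *ᵥ w :=
    ⟨_, map_eq_mulVec_of_map_mul_right (φ := φ.symm.toAddMonoidHom) (symm_map_mul_right hφ)⟩
  exact ⟨M, N, hM, hN,
    mul_eq_one_of_leftInverse_mulVec fun v => by rw [← hM, ← hN, AddEquiv.symm_apply_apply],
    mul_eq_one_of_leftInverse_mulVec fun w => by rw [← hN, ← hM, AddEquiv.apply_symm_apply]⟩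

/-- The additive equivalence `R^m ≃ R^n` given by left multiplication of column vectors by a
possibly non-square invertible matrix `M` with inverse `N`. -/
def mulVecAddEquiv (M : Matrix n m R) (N : Matrix m n R) (hNM : N * M = 1) (hMN : M * N = 1) :
    (m → R) ≃+ (n → R) where
  toFun := M.mulVec
  invFun := N.mulVec
  left_inv v := by rw [mulVec_mulVec, hNM, one_mulVec]
  right_inv w := by rw [mulVec_mulVec, hMN, one_mulVec]
  map_add' := mulVec_add M

end MatrixOfRightLinear

theorem rightFreeModuleIso_iff_exists_matrix {R : Type*} [Ring R] {m n : ℕ} :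
    RightFreeModuleIso R m n ↔
      ∃ (M : Matrix (Fin n) (Fin m) R) (N : Matrix (Fin m) (Fin n) R), N * M = 1 ∧ M * N = 1 := by
  constructor
  · rintro ⟨φ, hφ⟩
    obtain ⟨M, N, -, -, hNM, hMN⟩ := exists_matrix_of_map_mul_right hφ
    exact ⟨M, N, hNM, hMN⟩
  · rintro ⟨M, N, hNM, hMN⟩
    exact ⟨mulVecAddEquiv M N hNM hMN, fun v c => Matrix.mulVec_smul M (MulOpposite.op c) v⟩

theorem matrix_map_mul_map_eq_one_iff {m n R S : Type*} [NonAssocSemiring R] [NonAssocSemiring S]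
    [Fintype m] [DecidableEq n] {f : R →+* S} (hf : Function.Injective f)
    {M : Matrix n m R} {N : Matrix m n R} : M.map f * N.map f = 1 ↔ M * N = 1 := by
  rw [← Matrix.map_mul, ← Matrix.map_one f f.map_zero f.map_one, (Matrix.map_injective hf).eq_iff]

section Graded

open Matrix

variable {Γ : Type*} [AddCommGroup Γ] {A : Type*} [Ring A]

/-- A matrix is homogeneous with row shifts `δ` and column shifts `α` if its `(j, i)` entry has
degree `δ j - α i`. With the convention `A(α)_γ = A_(γ + α)`, these are the matrices of
degree-preserving maps from the free right module shifted by `α` to the one shifted by `δ`. -/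
def IsHomogeneousMatrix {m n : Type*} (𝒜 : Γ → AddSubgroup A) (δ : n → Γ) (α : m → Γ)
    (M : Matrix n m A) : Prop :=
  ∀ j i, M j i ∈ 𝒜 (δ j - α i)

variable {𝒜 : Γ → AddSubgroup A} [SetLike.GradedMonoid 𝒜]

theorem isHomogeneousMatrix_iff_mulVec_mem {m n : Type*} [Fintype m]
    {δ : n → Γ} {α : m → Γ} {M : Matrix n m A} :
    IsHomogeneousMatrix 𝒜 δ α M ↔
      ∀ (γ : Γ) (v : m → A), (∀ i, v i ∈ 𝒜 (γ + α i)) → ∀ j, (M *ᵥ v) j ∈ 𝒜 (γ + δ j) := by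
  constructor
  · intro hM γ v hv j
    refine sum_mem fun i _ => ?_
    have hdeg : δ j - α i + (γ + α i) = γ + δ j := by abel
    exact hdeg ▸ SetLike.mul_mem_graded (hM j i) (hv i)
  · classical
    intro h j i
    have hsingle (k : m) : (Pi.single i 1 : m → A) k ∈ 𝒜 (-α i + α k) := by
      obtain rfl | hk := eq_or_ne k i
      · simpa using SetLike.one_mem_graded 𝒜
      · simp [hk]
    simpa [neg_add_eq_sub] using h (-α i) (Pi.single i 1) hsingle j

theorem gradedRightFreeIso_iff_exists_matrix {m n : ℕ} {α : Fin m → Γ} {δ : Fin n → Γ} :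
    GradedRightFreeIso 𝒜 α δ ↔
      ∃ (M : Matrix (Fin n) (Fin m) A) (N : Matrix (Fin m) (Fin n) A),
        IsHomogeneousMatrix 𝒜 δ α M ∧ IsHomogeneousMatrix 𝒜 α δ N ∧ N * M = 1 ∧ M * N = 1 := by
  simp only [isHomogeneousMatrix_iff_mulVec_mem]
  constructor
  · rintro ⟨φ, hφ, hdeg⟩
    obtain ⟨M, N, hM, hN, hNM, hMN⟩ := exists_matrix_of_map_mul_right hφ
    refine ⟨M, N, fun γ v hv => ?_, fun γ w hw => ?_, hNM, hMN⟩
    · rwa [← hM, ← hdeg]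
    · rwa [← hN, hdeg, AddEquiv.apply_symm_apply]
  · rintro ⟨M, N, hM, hN, hNM, hMN⟩
    refine ⟨mulVecAddEquiv M N hNM hMN, fun v a => mulVec_smul M (MulOpposite.op a) v,
      fun γ v => ⟨hM γ v, fun hMv => ?_⟩⟩
    have hNMv : N *ᵥ (M *ᵥ v) = v := by rw [mulVec_mulVec, hNM, one_mulVec]
    exact hNMv ▸ hN γ (M *ᵥ v) hMv

theorem isHomogeneousMatrix_const_iff {m n : Type*} {ε : Γ} {M : Matrix n m A} :
    IsHomogeneousMatrix 𝒜 (fun _ => ε) (fun _ => ε) M ↔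
      ∃ M₀ : Matrix n m (𝒜 0), M₀.map (SetLike.GradeZero.subring 𝒜).subtype = M := by
  simp only [IsHomogeneousMatrix, sub_self]
  constructor
  · exact fun hM => ⟨Matrix.of fun j i => ⟨M j i, hM j i⟩, rfl⟩
  · rintro ⟨M₀, rfl⟩ j i
    exact (M₀ j i).2

theorem gradedRightFreeIso_const_iff {m n : ℕ} {ε : Γ} :
    GradedRightFreeIso 𝒜 (fun _ : Fin m => ε) (fun _ : Fin n => ε) ↔
      RightFreeModuleIso (𝒜 0) m n := by
  rw [gradedRightFreeIso_iff_exists_matrix, rightFreeModuleIso_iff_exists_matrix]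
  simp only [isHomogeneousMatrix_const_iff]
  have hι : Function.Injective (SetLike.GradeZero.subring 𝒜).subtype := Subtype.val_injective
  constructor
  · rintro ⟨_, _, ⟨M, rfl⟩, ⟨N, rfl⟩, hNM, hMN⟩
    exact ⟨M, N, (matrix_map_mul_map_eq_one_iff hι).1 hNM,
      (matrix_map_mul_map_eq_one_iff hι).1 hMN⟩
  · rintro ⟨M, N, hNM, hMN⟩
    exact ⟨_, _, ⟨M, rfl⟩, ⟨N, rfl⟩, (matrix_map_mul_map_eq_one_iff hι).2 hNM,
      (matrix_map_mul_map_eq_one_iff hι).2 hMN⟩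

end Graded

theorem gradeZero_IBN_iff_graded_IBN_general
    {Γ : Type*} [AddCommGroup Γ] {A : Type*} [Ring A] (𝒜 : Γ → AddSubgroup A)
    [SetLike.GradedMonoid 𝒜] :
    (∀ m n : ℕ, RightFreeModuleIso (𝒜 0) m n → m = n) ↔
    (∀ m n : ℕ,
      GradedRightFreeIso 𝒜 (fun _ : Fin m => (0 : Γ)) (fun _ : Fin n => (0 : Γ)) →
      m = n) := by
  simp only [gradedRightFreeIso_const_iff]

theorem gradeZero_IBN_iff_graded_IBN
    {Γ : Type*} [AddCommGroup Γ] [DecidableEq Γ]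
    {A : Type*} [Ring A] (𝒜 : Γ → AddSubgroup A) [GradedRing 𝒜] :
    (∀ m n : ℕ, RightFreeModuleIso (𝒜 0) m n → m = n) ↔
    (∀ m n : ℕ,
      GradedRightFreeIso 𝒜 (fun _ : Fin m => (0 : Γ)) (fun _ : Fin n => (0 : Γ)) →
      m = n) :=
  gradeZero_IBN_iff_graded_IBN_general 𝒜
end

section
/- Let n be a prime number and let H = {q ∈ ℚ : q = a/n^k for some a ∈ ℤ and k ∈ ℕ} be the additive subgroup of n-adic fractions of ℚ. If φ : H → H is an additive group automorphism such that φ(q) ≥ 0 whenever q ∈ H and q ≥ 0, then there exists j ∈ ℤ such that φ(q) = n^j · q for all q ∈ H. -/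
/-!
An additive map on a group of rationals containing `1` is multiplication by a constant `c`, the
image of `1`. On the `n`-adic fractions surjectivity makes `c` invertible among the fractions, say
`c = a / n ^ k` with inverse `b / n ^ l`. Clearing denominators, `a` divides a power of the prime
`n`, so `c = ± n ^ j`, and preservation of nonnegativity excludes the minus sign.
-/

theorem map_eq_rat_smul_of_coe_eq_rat_smul {V W : Type*} [AddCommGroup V] [Module ℚ V]
    [AddCommGroup W] [Module ℚ W] {H : AddSubgroup V} (f : H →+ W) {x y : H} {r : ℚ}
    (hxy : (x : V) = r • (y : V)) : f x = r • f y := by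
  have hden : (r.den : ℚ) ≠ 0 := Nat.cast_ne_zero.2 r.den_nz
  have hH : r.den • x = r.num • y := by
    apply Subtype.ext
    rw [AddSubgroup.coe_nsmul, AddSubgroup.coe_zsmul, hxy, ← Nat.cast_smul_eq_nsmul ℚ, smul_smul,
      Rat.den_mul_eq_num, Int.cast_smul_eq_zsmul]
  have hW : (r.den : ℚ) • f x = (r.num : ℚ) • f y := by
    rw [Nat.cast_smul_eq_nsmul, Int.cast_smul_eq_zsmul, ← map_nsmul, ← map_zsmul, hH]
  rw [← Rat.den_mul_eq_num, mul_smul] at hW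
  exact smul_right_injective W hden hW

theorem map_eq_map_one_mul_of_coe_eq_ratCast {K : Type*} [DivisionRing K] [CharZero K]
    {H : AddSubgroup K} (f : H →+ K) (hone : (1 : K) ∈ H) {q : H} {r : ℚ} (hq : (q : K) = r) :
    f q = f ⟨1, hone⟩ * q := by
  have hsmul : (q : K) = r • (1 : K) := by rw [Rat.smul_one_eq_cast, hq]
  rw [map_eq_rat_smul_of_coe_eq_rat_smul (y := ⟨1, hone⟩) f hsmul, Rat.smul_def, hq,
    (Rat.cast_commute r _).eq]

theorem exists_div_pow_eq_unit_mul_zpow {R K : Type*} [CommSemiring R] [Field K] [Algebra R K]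
    [FaithfulSMul R K] {p : R} (hp : Prime p) {a b : R} {k l : ℕ}
    (hab : algebraMap R K a / algebraMap R K p ^ k *
      (algebraMap R K b / algebraMap R K p ^ l) = 1) :
    ∃ (u : Rˣ) (j : ℤ),
      algebraMap R K a / algebraMap R K p ^ k = algebraMap R K u * algebraMap R K p ^ j := by
  have hinj := FaithfulSMul.algebraMap_injective R K
  have : IsCancelMulZero R := hinj.isCancelMulZero _ (map_zero _) (map_mul _)
  have hpK : algebraMap R K p ≠ 0 := (map_ne_zero_iff _ hinj).2 hp.ne_zero
  have hmul : a * b = p ^ (k + l) := by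
    apply hinj
    rw [div_mul_div_comm, ← pow_add, div_eq_one_iff_eq (pow_ne_zero _ hpK)] at hab
    rw [map_mul, map_pow, hab]
  obtain ⟨m, -, hassoc⟩ := (dvd_prime_pow hp _).1 (Dvd.intro b hmul)
  obtain ⟨u, rfl⟩ := hassoc.symm
  refine ⟨u, m - k, ?_⟩
  rw [zpow_sub₀ hpK, zpow_natCast, zpow_natCast, map_mul, map_pow, mul_div_assoc', mul_comm]

theorem order_preserving_automorphism_of_nadic_fractions_general {K : Type*} [Field K] [CharZero K]
    {p : ℕ} (hp : p.Prime) {H : AddSubgroup K}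
    (hH : ∀ q : K, q ∈ H ↔ ∃ (a : ℤ) (k : ℕ), q = (a : K) / (p : K) ^ k)
    (φ : H →+ H) (hφ : Function.Surjective φ) :
    ∃ j : ℤ, (∀ q : H, (φ q : K) = (p : K) ^ j * q) ∨ ∀ q : H, (φ q : K) = -((p : K) ^ j * q) := by
  have h1 : (1 : K) ∈ H := (hH 1).2 ⟨1, 0, by simp⟩
  have hmul (q : H) : (φ q : K) = φ ⟨1, h1⟩ * q := by
    obtain ⟨a, k, hq⟩ := (hH q).1 q.2
    exact map_eq_map_one_mul_of_coe_eq_ratCast (H.subtype.comp φ) h1 (r := a / p ^ k)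
      (by rw [hq]; push_cast; rfl)
  obtain ⟨d, hd⟩ := hφ ⟨1, h1⟩
  have hinv : (φ ⟨1, h1⟩ : K) * d = 1 := by rw [← hmul, hd]
  obtain ⟨a, k, ha⟩ := (hH _).1 (φ ⟨1, h1⟩).2
  obtain ⟨b, l, hb⟩ := (hH _).1 d.2
  obtain ⟨u, j, huj⟩ := exists_div_pow_eq_unit_mul_zpow (K := K) (Nat.prime_iff_prime_int.1 hp)
    (a := a) (b := b) (k := k) (l := l) (by simpa [ha, hb] using hinv)
  have hφ1 : (φ ⟨1, h1⟩ : K) = ((u : ℤ) : K) * (p : K) ^ j := by simpa [ha] using huj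
  rcases Int.units_eq_one_or u with rfl | rfl
  · exact ⟨j, .inl fun q => by rw [hmul, hφ1, Units.val_one, Int.cast_one, one_mul]⟩
  · exact ⟨j, .inr fun q => by
      rw [hmul, hφ1, Units.val_neg, Units.val_one, Int.cast_neg, Int.cast_one, neg_one_mul,
        neg_mul]⟩

theorem order_preserving_automorphism_of_nadic_fractions
    (n : ℕ) (hn : n.Prime)
    (H : AddSubgroup ℚ)
    (hH : ∀ q : ℚ, q ∈ H ↔ ∃ (a : ℤ) (k : ℕ), q = (a : ℚ) / (n : ℚ) ^ k)
    (φ : H ≃+ H)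
    (hpos : ∀ q : H, 0 ≤ (q : ℚ) → 0 ≤ ((φ q : H) : ℚ)) :
    ∃ j : ℤ, ∀ q : H, ((φ q : H) : ℚ) = (n : ℚ) ^ j * (q : ℚ) := by
  obtain ⟨j, hj | hj⟩ := order_preserving_automorphism_of_nadic_fractions_general hn hH
    φ.toAddMonoidHom φ.surjective
  · exact ⟨j, hj⟩
  · have h1 : (1 : ℚ) ∈ H := (hH 1).2 ⟨1, 0, by simp⟩
    have hnonneg : 0 ≤ -((n : ℚ) ^ j * 1) := (hpos ⟨1, h1⟩ zero_le_one).trans_eq (hj ⟨1, h1⟩)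
    have hzpow : 0 < (n : ℚ) ^ j := zpow_pos (Nat.cast_pos.2 hn.pos) j
    linarith
end

section
/- Let Γ be an abelian group and A a Γ-graded field. Let R = M_{n_1}(A)(δ̄^{(1)}) × ⋯ × M_{n_l}(A)(δ̄^{(l)}) be a graded matricial A-algebra, where δ̄^{(s)} ∈ Γ^{n_s} for each s. Let P, Q and G be graded finitely generated projective right R-modules. If P ⊕ G and Q ⊕ G are isomorphic as graded right R-modules, then P and Q are isomorphic as graded right R-modules. -/
open MulOpposite

/-!
Cancellation for graded matricial algebras over a graded field: if R is a
finite product of shifted graded matrix algebras M_{n_s}(A)(δ̄^{(s)}) over a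
Γ-graded field A, and P, Q, G are graded finitely generated projective right
R-modules with P ⊕ G ≅ Q ⊕ G as graded right R-modules, then P ≅ Q as graded
right R-modules.  Right R-modules are formalized as Rᵐᵒᵖ-modules.
-/

/-- The underlying ring of a graded matricial algebra: a finite product of
matrix rings over `A`. -/
abbrev MatricialAlg (A : Type*) [Ring A] {l : ℕ} (n : Fin l → ℕ) : Type _ :=
  ∀ s : Fin l, Matrix (Fin (n s)) (Fin (n s)) A

/-- The `lam`-component of the grading on the graded matricial algebra
`M_{n_1}(A)(δ̄^{(1)}) × ⋯ × M_{n_l}(A)(δ̄^{(l)})`. -/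
def matricialGrading {Γ : Type*} [AddCommGroup Γ] {A : Type*} [Ring A]
    (𝒜 : Γ → AddSubgroup A) {l : ℕ} {n : Fin l → ℕ}
    (δ : ∀ s : Fin l, Fin (n s) → Γ) (lam : Γ) :
    AddSubgroup (MatricialAlg A n) where
  carrier := {x | ∀ s i j, x s i j ∈ 𝒜 (lam + δ s j - δ s i)}
  add_mem' := fun h1 h2 s i j => add_mem (h1 s i j) (h2 s i j)
  zero_mem' := fun s i j => zero_mem _
  neg_mem' := fun h s i j => neg_mem (h s i j)

/-!
Let `S` be a graded ring with homogeneous orthogonal idempotents `e_i` summing to `1`. A graded left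
`S`-module `M` is the direct sum of its Peirce components, the degree `γ` parts of the `e_i M`. If
`S` is a graded matricial algebra over a graded field and the `e_i` are the diagonal matrix units,
each Peirce component is a vector space over a division ring, of finite dimension when `M` is
finitely generated, so `G` cancels componentwise by comparing dimensions. The isomorphisms obtained
this way need not commute with the action of `S`. But the nonzero homogeneous elements of
`e_j S e_i` are invertible, so the components fall into classes of isomorphic ones: keep the
isomorphism at one representative of each class and transport it to the other members. Linearity at
the representative makes the transported isomorphisms commute with the action of `S`.
-/

open scoped DirectSum

universe u v w w'

theorem nonempty_linearEquiv_of_prod_linearEquiv {K : Type u} {V : Type v} {W : Type w}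
    {U : Type w'} [DivisionRing K]
    [AddCommGroup V] [AddCommGroup W] [AddCommGroup U] [Module K V] [Module K W] [Module K U]
    [Module.Finite K U] (f : (V × U) ≃ₗ[K] (W × U)) : Nonempty (V ≃ₗ[K] W) := by
  have hU : Cardinal.lift.{max v w w'} (Module.rank K U) < Cardinal.aleph0 :=
    Cardinal.lift_lt_aleph0.2 (Module.rank_lt_aleph0 K U)
  have h := f.lift_rank_eq
  simp only [rank_prod, Cardinal.lift_add, Cardinal.lift_lift] at h
  apply nonempty_linearEquiv_of_lift_rank_eq
  rw [← Cardinal.lift_inj.{max v w, w'}, Cardinal.lift_lift, Cardinal.lift_lift]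
  exact Cardinal.eq_of_add_eq_add_right h hU

section PeirceHom

variable {Γ ι S : Type*} [AddCommGroup Γ] [Ring S]

/-- The part of degree `y.2 - x.2` of `e_y S e_x`, for a family `e` of idempotents of a ring graded
by `𝒮`. It acts on left modules as maps from the Peirce component `x` to the Peirce
component `y`. -/
def peirceHom (𝒮 : Γ → AddSubgroup S) (e : ι → S) (x y : ι × Γ) : AddSubgroup S where
  carrier := {a | a ∈ 𝒮 (y.2 - x.2) ∧ e y.1 * a = a ∧ a * e x.1 = a}
  add_mem' ha hb := ⟨add_mem ha.1 hb.1, by rw [mul_add, ha.2.1, hb.2.1],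
    by rw [add_mul, ha.2.2, hb.2.2]⟩
  zero_mem' := ⟨zero_mem _, mul_zero _, zero_mul _⟩
  neg_mem' ha := ⟨neg_mem ha.1, by rw [mul_neg, ha.2.1], by rw [neg_mul, ha.2.2]⟩

/-- A pair of mutually inverse elements of `peirceHom 𝒮 e x y` and `peirceHom 𝒮 e y x`. -/
structure PeirceIso (𝒮 : Γ → AddSubgroup S) (e : ι → S) (x y : ι × Γ) where
  hom : S
  inv : S
  hom_mem : hom ∈ peirceHom 𝒮 e x y
  inv_mem : inv ∈ peirceHom 𝒮 e y x
  inv_mul_hom : inv * hom = e x.1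
  hom_mul_inv : hom * inv = e y.1

/-- A complete system of orthogonal idempotents of degree zero in a ring `S` which is spanned by
the components `𝒮 γ`. -/
class HomogeneousFrame [Fintype ι] (𝒮 : Γ → AddSubgroup S) (e : ι → S) : Prop where
  complete : CompleteOrthogonalIdempotents e
  mem_zero : ∀ i, e i ∈ 𝒮 0
  iSup_grading : ⨆ γ, 𝒮 γ = ⊤

/-- A homogeneous frame of nonzero idempotents such that every nonzero homogeneous element of
`e_j S e_i` is invertible, as a map from `i` to `j`. Matrix units over a graded division ring are
the model. -/
class HomogeneousDivisionFrame [Fintype ι] (𝒮 : Γ → AddSubgroup S) (e : ι → S) : Prop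
    extends HomogeneousFrame 𝒮 e where
  ne_zero : ∀ i, e i ≠ 0
  exists_inverse : ∀ {γ i j a}, a ∈ 𝒮 γ → e j * a = a → a * e i = a → a ≠ 0 →
    ∃ b ∈ 𝒮 (-γ), b * a = e i ∧ a * b = e j

variable {𝒮 : Γ → AddSubgroup S} {e : ι → S} {x y z : ι × Γ}

theorem mul_mem_peirceHom [SetLike.GradedMonoid 𝒮] {a b : S} (hb : b ∈ peirceHom 𝒮 e y z)
    (ha : a ∈ peirceHom 𝒮 e x y) : b * a ∈ peirceHom 𝒮 e x z :=
  ⟨by simpa using SetLike.mul_mem_graded hb.1 ha.1, by rw [← mul_assoc, hb.2.1],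
    by rw [mul_assoc, ha.2.2]⟩

variable (𝒮 e) in
theorem peirceHom_self [Fintype ι] [HomogeneousFrame 𝒮 e] (x : ι × Γ) :
    e x.1 ∈ peirceHom 𝒮 e x x :=
  have he : e x.1 * e x.1 = e x.1 := (HomogeneousFrame.complete 𝒮).idem x.1
  ⟨by simpa using HomogeneousFrame.mem_zero x.1, he, he⟩

namespace PeirceIso

variable (𝒮 e) in
/-- The identity isomorphism. -/
def refl [Fintype ι] [HomogeneousFrame 𝒮 e] (x : ι × Γ) : PeirceIso 𝒮 e x x :=
  have h := peirceHom_self 𝒮 e x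
  ⟨e x.1, e x.1, h, h, h.2.1, h.2.1⟩

/-- The inverse isomorphism. -/
def symm (u : PeirceIso 𝒮 e x y) : PeirceIso 𝒮 e y x :=
  ⟨u.inv, u.hom, u.inv_mem, u.hom_mem, u.hom_mul_inv, u.inv_mul_hom⟩

/-- The composite isomorphism. -/
def trans [SetLike.GradedMonoid 𝒮] (u : PeirceIso 𝒮 e x y) (v : PeirceIso 𝒮 e y z) :
    PeirceIso 𝒮 e x z where
  hom := v.hom * u.hom
  inv := u.inv * v.inv
  hom_mem := mul_mem_peirceHom v.hom_mem u.hom_mem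
  inv_mem := mul_mem_peirceHom u.inv_mem v.inv_mem
  inv_mul_hom := by
    rw [mul_assoc, ← mul_assoc v.inv, v.inv_mul_hom, u.hom_mem.2.1, u.inv_mul_hom]
  hom_mul_inv := by
    rw [mul_assoc, ← mul_assoc u.hom, u.hom_mul_inv, v.inv_mem.2.1, v.hom_mul_inv]

end PeirceIso

variable (𝒮 e) in
theorem exists_peirceIso_representatives [Fintype ι] [HomogeneousFrame 𝒮 e]
    [SetLike.GradedMonoid 𝒮] :
    ∃ ρ : ι × Γ → ι × Γ, (∀ x, Nonempty (PeirceIso 𝒮 e (ρ x) x)) ∧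
      ∀ x y, Nonempty (PeirceIso 𝒮 e x y) → ρ x = ρ y := by
  let _ : Setoid (ι × Γ) :=
    { r x y := Nonempty (PeirceIso 𝒮 e x y)
      iseqv := ⟨fun x => ⟨.refl 𝒮 e x⟩, fun ⟨u⟩ => ⟨u.symm⟩, fun ⟨u⟩ ⟨v⟩ => ⟨u.trans v⟩⟩ }
  exact ⟨fun x => (⟦x⟧ : Quotient _).out, Quotient.mk_out,
    fun x y h => congrArg Quotient.out (Quotient.sound h)⟩

variable (𝒮) in
theorem mul_mem_iSup_peirceHom [Fintype ι] [HomogeneousFrame 𝒮 e] [SetLike.GradedMonoid 𝒮]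
    (s : S) (x : ι × Γ) : s * e x.1 ∈ ⨆ y, peirceHom 𝒮 e x y := by
  have hs : s ∈ ⨆ γ, 𝒮 γ := by
    rw [HomogeneousFrame.iSup_grading e]
    exact AddSubgroup.mem_top s
  refine AddSubgroup.iSup_induction 𝒮 (C := fun s => s * e x.1 ∈ ⨆ y, peirceHom 𝒮 e x y) hs
    (fun γ s hs => ?_) (by simp) fun s t hs ht => by simpa only [add_mul] using add_mem hs ht
  rw [← one_mul s, ← (HomogeneousFrame.complete 𝒮 (e := e)).complete, Finset.sum_mul,
    Finset.sum_mul]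
  refine sum_mem fun i _ => AddSubgroup.mem_iSup_of_mem (i, γ + x.2) ?_
  have hi := peirceHom_self 𝒮 e (i, x.2)
  have hx := peirceHom_self 𝒮 e x
  refine ⟨?_, ?_, ?_⟩
  · simpa using SetLike.mul_mem_graded (SetLike.mul_mem_graded hi.1 hs) hx.1
  · rw [← mul_assoc, ← mul_assoc, hi.2.1]
  · rw [mul_assoc, hx.2.1]

variable [Fintype ι] [HomogeneousDivisionFrame 𝒮 e] [SetLike.GradedMonoid 𝒮]

theorem exists_peirceIso_of_ne_zero {a : S} (ha : a ∈ peirceHom 𝒮 e x y) (h0 : a ≠ 0) :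
    ∃ u : PeirceIso 𝒮 e x y, u.hom = a := by
  obtain ⟨b, hb, hba, hab⟩ := HomogeneousDivisionFrame.exists_inverse ha.1 ha.2.1 ha.2.2 h0
  have hx := peirceHom_self 𝒮 e x
  have hy := peirceHom_self 𝒮 e y
  refine ⟨⟨a, e x.1 * b * e y.1, ha, ⟨?_, ?_, ?_⟩, ?_, ?_⟩, rfl⟩
  · simpa using SetLike.mul_mem_graded (SetLike.mul_mem_graded hx.1 hb) hy.1
  · rw [← mul_assoc, ← mul_assoc, hx.2.1]
  · rw [mul_assoc, hy.2.1]
  · rw [mul_assoc, ha.2.1, mul_assoc, hba, hx.2.1]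
  · rw [← mul_assoc, ← mul_assoc, ha.2.2, hab, hy.2.1]

variable (𝒮 e) in
theorem exists_peirceHom_generator (x y : ι × Γ) :
    ∃ u ∈ peirceHom 𝒮 e x y, ∀ a ∈ peirceHom 𝒮 e x y, ∃ c ∈ peirceHom 𝒮 e y y, a = c * u := by
  by_cases h : ∃ a ∈ peirceHom 𝒮 e x y, a ≠ 0
  · obtain ⟨_, hu, hu0⟩ := h
    obtain ⟨u, rfl⟩ := exists_peirceIso_of_ne_zero hu hu0
    refine ⟨u.hom, hu, fun a ha => ⟨a * u.inv, mul_mem_peirceHom ha u.inv_mem, ?_⟩⟩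
    rw [mul_assoc, u.inv_mul_hom, ha.2.2]
  · push Not at h
    exact ⟨0, zero_mem _, fun a ha => ⟨0, zero_mem _, by rw [h a ha, zero_mul]⟩⟩

end PeirceHom

section PeirceEnd

variable {Γ ι S : Type*} [AddCommGroup Γ] [Ring S] [Fintype ι]
  (𝒮 : Γ → AddSubgroup S) [SetLike.GradedMonoid 𝒮] (e : ι → S)

/-- The degree zero part of the corner ring `e_x S e_x`, whose unit is `e_x`. -/
def peirceEnd (x : ι × Γ) : NonUnitalSubring S where
  __ := peirceHom 𝒮 e x x
  mul_mem' := mul_mem_peirceHom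

instance [HomogeneousFrame 𝒮 e] (x : ι × Γ) : Ring (peirceEnd 𝒮 e x) where
  __ := (inferInstance : NonUnitalRing (peirceEnd 𝒮 e x))
  one := ⟨e x.1, peirceHom_self 𝒮 e x⟩
  one_mul a := Subtype.ext a.2.2.1
  mul_one a := Subtype.ext a.2.2.2

noncomputable instance [HomogeneousDivisionFrame 𝒮 e] (x : ι × Γ) :
    DivisionRing (peirceEnd 𝒮 e x) :=
  have : Nontrivial (peirceEnd 𝒮 e x) :=
    ⟨1, 0, fun h => HomogeneousDivisionFrame.ne_zero 𝒮 x.1 (congrArg Subtype.val h)⟩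
  .ofIsUnitOrEqZero fun a => or_iff_not_imp_right.2 fun h0 => by
    obtain ⟨u, hu⟩ := exists_peirceIso_of_ne_zero a.2 (fun h => h0 (Subtype.ext h))
    refine ⟨⟨a, ⟨u.inv, u.inv_mem⟩, Subtype.ext ?_, Subtype.ext ?_⟩, rfl⟩
    · exact (congrArg (· * u.inv) hu).symm.trans u.hom_mul_inv
    · exact (congrArg (u.inv * ·) hu).symm.trans u.inv_mul_hom

end PeirceEnd

section PeirceComponent

variable {Γ ι S M : Type*} [Ring S] [AddCommGroup M] [Module S M]

/-- The elements of degree `x.2` in `e_x M`, for a left module `M` graded by `ℳ`. -/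
def peirceComponent (e : ι → S) (ℳ : Γ → AddSubgroup M) (x : ι × Γ) : AddSubgroup M where
  carrier := {m | m ∈ ℳ x.2 ∧ e x.1 • m = m}
  add_mem' hm hn := ⟨add_mem hm.1 hn.1, by rw [smul_add, hm.2, hn.2]⟩
  zero_mem' := ⟨zero_mem _, smul_zero _⟩
  neg_mem' hm := ⟨neg_mem hm.1, by rw [smul_neg, hm.2]⟩

variable {𝒮 : Γ → AddSubgroup S} {e : ι → S} {ℳ : Γ → AddSubgroup M} {x y : ι × Γ}

theorem smul_decompose_coeAddMonoidHom_peirceComponent [DecidableEq ι] [DecidableEq Γ]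
    [DirectSum.Decomposition ℳ] (he : OrthogonalIdempotents e)
    (v : ⨁ x, peirceComponent e ℳ x) (x : ι × Γ) :
    e x.1 • (DirectSum.decompose ℳ (DirectSum.coeAddMonoidHom _ v) x.2 : M) = v x := by
  induction v using DirectSum.induction_on with
  | zero => simp
  | add v w hv hw => simp [hv, hw]
  | of y m =>
    rw [DirectSum.coeAddMonoidHom_of]
    by_cases hxy : y = x
    · subst hxy
      rw [DirectSum.of_eq_same, DirectSum.decompose_of_mem_same ℳ m.2.1, m.2.2]
    rw [DirectSum.of_eq_of_ne _ _ _ (Ne.symm hxy)]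
    by_cases h2 : y.2 = x.2
    · have h1 : x.1 ≠ y.1 := fun h1 => hxy (Prod.ext h1.symm h2)
      rw [← h2, DirectSum.decompose_of_mem_same ℳ m.2.1, ← m.2.2, smul_smul,
        he.ortho h1, zero_smul, ZeroMemClass.coe_zero]
    · rw [DirectSum.decompose_of_mem_ne ℳ m.2.1 h2, smul_zero, ZeroMemClass.coe_zero]

variable [AddCommGroup Γ]

theorem smul_mem_peirceComponent [SetLike.GradedSMul 𝒮 ℳ] {a : S} {m : M}
    (ha : a ∈ peirceHom 𝒮 e x y) (hm : m ∈ peirceComponent e ℳ x) :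
    a • m ∈ peirceComponent e ℳ y :=
  ⟨by simpa using SetLike.GradedSMul.smul_mem ha.1 hm.1, by rw [smul_smul, ha.2.1]⟩

variable [Fintype ι]

instance [SetLike.GradedMonoid 𝒮] [SetLike.GradedSMul 𝒮 ℳ] [HomogeneousFrame 𝒮 e] (x : ι × Γ) :
    Module (peirceEnd 𝒮 e x) (peirceComponent e ℳ x) where
  smul a m := ⟨(a : S) • (m : M), smul_mem_peirceComponent a.2 m.2⟩
  one_smul m := Subtype.ext m.2.2
  mul_smul _ _ _ := Subtype.ext (mul_smul _ _ _)
  smul_zero _ := Subtype.ext (smul_zero _)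
  smul_add _ _ _ := Subtype.ext (smul_add _ _ _)
  add_smul _ _ _ := Subtype.ext (add_smul _ _ _)
  zero_smul _ := Subtype.ext (zero_smul _ _)

theorem sum_idempotent_smul (he : CompleteOrthogonalIdempotents e) (m : M) :
    ∑ i, e i • m = m := by
  rw [← Finset.sum_smul, he.complete, one_smul]

variable (𝒮) in
theorem idempotent_smul_mem_peirceComponent [SetLike.GradedSMul 𝒮 ℳ] [HomogeneousFrame 𝒮 e]
    {γ : Γ} {m : M} (hm : m ∈ ℳ γ) (i : ι) : e i • m ∈ peirceComponent e ℳ (i, γ) :=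
  ⟨by simpa using SetLike.GradedSMul.smul_mem (HomogeneousFrame.mem_zero (𝒮 := 𝒮) (e := e) i) hm,
    by rw [smul_smul, (HomogeneousFrame.complete 𝒮 (e := e)).idem i]⟩

theorem smul_induction_of_mem_peirceComponent [HomogeneousFrame 𝒮 e] [SetLike.GradedMonoid 𝒮]
    {x : ι × Γ} {m : M} (hm : m ∈ peirceComponent e ℳ x) {C : M → Prop} (zero : C 0)
    (add : ∀ m n, C m → C n → C (m + n))
    (smul : ∀ y, ∀ a ∈ peirceHom 𝒮 e x y, C (a • m)) (s : S) : C (s • m) := by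
  rw [← hm.2, smul_smul]
  exact AddSubgroup.iSup_induction _ (C := fun a => C (a • m)) (mul_mem_iSup_peirceHom 𝒮 s x) smul
    (by rwa [zero_smul]) fun a b ha hb => by simpa only [add_smul] using add _ _ ha hb

variable [DecidableEq Γ]

theorem iSup_peirceComponent (𝒮 : Γ → AddSubgroup S) (e : ι → S) (ℳ : Γ → AddSubgroup M)
    [DirectSum.Decomposition ℳ] [SetLike.GradedSMul 𝒮 ℳ]
    [HomogeneousFrame 𝒮 e] : ⨆ x, peirceComponent e ℳ x = ⊤ := by
  refine (AddSubgroup.eq_top_iff' _).2 fun m => ?_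
  induction m using DirectSum.Decomposition.inductionOn ℳ with
  | zero => exact zero_mem _
  | add m m' h h' => exact add_mem h h'
  | @homogeneous γ m =>
    rw [← sum_idempotent_smul (HomogeneousFrame.complete 𝒮 (e := e)) (m : M)]
    exact sum_mem fun i _ =>
      AddSubgroup.mem_iSup_of_mem (i, γ) (idempotent_smul_mem_peirceComponent 𝒮 m.2 i)

theorem exists_finset_span_eq_top_of_peirceComponent (𝒮 : Γ → AddSubgroup S) (e : ι → S)
    (ℳ : Γ → AddSubgroup M) [DirectSum.Decomposition ℳ] [SetLike.GradedSMul 𝒮 ℳ]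
    [HomogeneousFrame 𝒮 e] [Module.Finite S M] :
    ∃ t : Finset M, (∀ m ∈ t, ∃ x, m ∈ peirceComponent e ℳ x) ∧
      Submodule.span S (t : Set M) = ⊤ := by
  have hspan : Submodule.span S {m | ∃ x, m ∈ peirceComponent e ℳ x} = ⊤ := by
    have h : ⨆ x, peirceComponent e ℳ x ≤
        (Submodule.span S {m | ∃ x, m ∈ peirceComponent e ℳ x}).toAddSubgroup :=
      iSup_le fun x m hm => Submodule.subset_span ⟨x, hm⟩
    rw [iSup_peirceComponent 𝒮 e ℳ] at h
    exact top_unique fun m hm => h hm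
  obtain ⟨t, ht, htop⟩ := (Submodule.fg_span_iff_fg_span_finset_subset _).1
    (hspan ▸ Module.Finite.fg_top)
  exact ⟨t, ht, htop.symm.trans hspan⟩

theorem isInternal_peirceComponent (𝒮 : Γ → AddSubgroup S) (e : ι → S) (ℳ : Γ → AddSubgroup M)
    [DecidableEq ι] [DirectSum.Decomposition ℳ] [SetLike.GradedSMul 𝒮 ℳ]
    [HomogeneousFrame 𝒮 e] : DirectSum.IsInternal (peirceComponent e ℳ) := by
  refine ⟨(injective_iff_map_eq_zero _).2 fun v hv => ?_, ?_⟩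
  · have he := (HomogeneousFrame.complete 𝒮 (e := e)).toOrthogonalIdempotents
    refine DFinsupp.ext fun x => Subtype.ext ?_
    rw [← smul_decompose_coeAddMonoidHom_peirceComponent he, hv]
    simp
  · refine AddMonoidHom.range_eq_top.1 (top_unique ?_)
    rw [← iSup_peirceComponent 𝒮 e ℳ]
    exact iSup_le fun x m hm => ⟨.of _ x ⟨m, hm⟩, DirectSum.coeAddMonoidHom_of _ _ _⟩

end PeirceComponent

section Finite

variable {Γ ι S M : Type*} [AddCommGroup Γ] [DecidableEq Γ] [Fintype ι] [DecidableEq ι] [Ring S]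
  [AddCommGroup M] [Module S M] (𝒮 : Γ → AddSubgroup S) (e : ι → S) (ℳ : Γ → AddSubgroup M)
  [DirectSum.Decomposition ℳ] [SetLike.GradedSMul 𝒮 ℳ]

/-- The decomposition of a graded module into its Peirce components. -/
noncomputable def peirceEquiv [HomogeneousFrame 𝒮 e] : (⨁ x, peirceComponent e ℳ x) ≃+ M :=
  .ofBijective (DirectSum.coeAddMonoidHom _) (isInternal_peirceComponent 𝒮 e ℳ)

@[simp]
theorem peirceEquiv_symm_coe [HomogeneousFrame 𝒮 e] {x : ι × Γ} (m : peirceComponent e ℳ x) :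
    (peirceEquiv 𝒮 e ℳ).symm m = .of (fun x => peirceComponent e ℳ x) x m :=
  (AddEquiv.symm_apply_eq _).2 (DirectSum.coeAddMonoidHom_of _ _ _).symm

variable {ℳ} in
theorem exists_peirceEquiv_symm_smul [HomogeneousFrame 𝒮 e] [SetLike.GradedMonoid 𝒮]
    {x : ι × Γ} {m : M} (hm : m ∈ peirceComponent e ℳ x) (s : S) (y : ι × Γ) :
    ∃ a ∈ peirceHom 𝒮 e x y, ((peirceEquiv 𝒮 e ℳ).symm (s • m) y : M) = a • m := by
  refine smul_induction_of_mem_peirceComponent (𝒮 := 𝒮)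
    (C := fun p => ∃ a ∈ peirceHom 𝒮 e x y, ((peirceEquiv 𝒮 e ℳ).symm p y : M) = a • m) hm
    ⟨0, zero_mem _, by simp⟩ ?_ ?_ s
  · rintro p q ⟨a, ha, hp⟩ ⟨b, hb, hq⟩
    exact ⟨a + b, add_mem ha hb, by
      rw [map_add, DirectSum.add_apply, AddSubgroup.coe_add, hp, hq, add_smul]⟩
  · intro z a ha
    rw [peirceEquiv_symm_coe 𝒮 e ℳ ⟨a • m, smul_mem_peirceComponent ha hm⟩]
    obtain rfl | hzy := eq_or_ne y z
    · exact ⟨a, ha, by rw [DirectSum.of_eq_same]⟩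
    · exact ⟨0, zero_mem _, by
        rw [DirectSum.of_eq_of_ne _ _ _ hzy, zero_smul, ZeroMemClass.coe_zero]⟩

omit [DecidableEq ι] in
theorem finite_peirceComponent [HomogeneousDivisionFrame 𝒮 e] [SetLike.GradedMonoid 𝒮]
    [Module.Finite S M] (y : ι × Γ) :
    Module.Finite (peirceEnd 𝒮 e y) (peirceComponent e ℳ y) := by
  classical
  obtain ⟨t, ht, htop⟩ := exists_finset_span_eq_top_of_peirceComponent 𝒮 e ℳ
  choose x hx using ht
  choose u hu hgen using fun x => exists_peirceHom_generator 𝒮 e x y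
  let f (m : t) : peirceComponent e ℳ y :=
    ⟨u (x m m.2) • m, smul_mem_peirceComponent (hu _) (hx m m.2)⟩
  let N := Submodule.span (peirceEnd 𝒮 e y) (Set.range f)
  have key (m : M) (hm : m ∈ Submodule.span S (t : Set M)) :
      ∀ s : S, (peirceEquiv 𝒮 e ℳ).symm (s • m) y ∈ N := by
    induction hm using Submodule.span_induction with
    | zero => simp
    | add m n _ _ hm hn =>
      intro s
      rw [smul_add, map_add]
      exact N.add_mem (hm s) (hn s)
    | smul r m _ hm =>
      intro s
      rw [smul_smul]
      exact hm _
    | mem m hm =>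
      intro s
      obtain ⟨a, ha, hs⟩ := exists_peirceEquiv_symm_smul 𝒮 e (hx m hm) s y
      obtain ⟨c, hc, rfl⟩ := hgen _ a ha
      rw [mul_smul] at hs
      exact (Subtype.ext hs : _ = (⟨c, hc⟩ : peirceEnd 𝒮 e y) • f ⟨m, hm⟩) ▸
        N.smul_mem _ (Submodule.subset_span ⟨⟨m, hm⟩, rfl⟩)
  refine ⟨Submodule.fg_def.2 ⟨_, Set.finite_range f, eq_top_iff.2 fun m _ => ?_⟩⟩
  simpa using key m (htop ▸ Submodule.mem_top) 1

end Finite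

section Functoriality

variable {Γ ι S M N : Type*} [AddCommGroup Γ] [Fintype ι] [Ring S]
  [AddCommGroup M] [Module S M] [AddCommGroup N] [Module S N]
  (𝒮 : Γ → AddSubgroup S) [SetLike.GradedMonoid 𝒮] (e : ι → S) [HomogeneousFrame 𝒮 e]
  {ℳ : Γ → AddSubgroup M} [SetLike.GradedSMul 𝒮 ℳ] {𝒩 : Γ → AddSubgroup N}
  [SetLike.GradedSMul 𝒮 𝒩]

/-- A graded isomorphism restricts to isomorphisms of the Peirce components. -/
def peirceComponentCongr (φ : M ≃ₗ[S] N) (hφ : ∀ γ, φ '' ℳ γ = 𝒩 γ) (x : ι × Γ) :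
    peirceComponent e ℳ x ≃ₗ[peirceEnd 𝒮 e x] peirceComponent e 𝒩 x where
  toFun m := ⟨φ m, (hφ x.2).subset ⟨m, m.2.1, rfl⟩, by rw [← map_smul, m.2.2]⟩
  invFun n := ⟨φ.symm n, by
    obtain ⟨m, hm, hmn⟩ := (hφ x.2).superset n.2.1
    rwa [← hmn, φ.symm_apply_apply], by rw [← map_smul, n.2.2]⟩
  map_add' _ _ := Subtype.ext (map_add φ _ _)
  map_smul' a _ := Subtype.ext (map_smul φ (a : S) _)
  left_inv _ := Subtype.ext (φ.symm_apply_apply _)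
  right_inv _ := Subtype.ext (φ.apply_symm_apply _)

instance gradedSMul_prod : SetLike.GradedSMul 𝒮 fun γ => (ℳ γ).prod (𝒩 γ) where
  smul_mem _ _ _ _ ha hm :=
    ⟨SetLike.GradedSMul.smul_mem (B := ℳ) ha hm.1, SetLike.GradedSMul.smul_mem (B := 𝒩) ha hm.2⟩

variable (ℳ 𝒩) in
/-- The Peirce components of a product of graded modules. -/
def peirceComponentProdEquiv (x : ι × Γ) :
    peirceComponent e (fun γ => (ℳ γ).prod (𝒩 γ)) x ≃ₗ[peirceEnd 𝒮 e x]
      peirceComponent e ℳ x × peirceComponent e 𝒩 x where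
  toFun m := (⟨m.1.1, m.2.1.1, congrArg Prod.fst m.2.2⟩, ⟨m.1.2, m.2.1.2, congrArg Prod.snd m.2.2⟩)
  invFun m := ⟨(m.1, m.2), ⟨m.1.2.1, m.2.2.1⟩, Prod.ext m.1.2.2 m.2.2.2⟩
  map_add' _ _ := rfl
  map_smul' _ _ := rfl
  left_inv _ := rfl
  right_inv _ := rfl

end Functoriality

section Glue

variable {Γ ι S M N : Type*} [AddCommGroup Γ] [DecidableEq Γ] [Fintype ι] [DecidableEq ι] [Ring S]
  [AddCommGroup M] [Module S M] [AddCommGroup N] [Module S N]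
  (𝒮 : Γ → AddSubgroup S) {e : ι → S} {ℳ : Γ → AddSubgroup M} {𝒩 : Γ → AddSubgroup N}
  [DirectSum.Decomposition ℳ] [DirectSum.Decomposition 𝒩]
  [SetLike.GradedSMul 𝒮 ℳ] [SetLike.GradedSMul 𝒮 𝒩] [HomogeneousFrame 𝒮 e]

/-- The isomorphism of graded groups with prescribed restrictions to the Peirce components. -/
noncomputable def glueEquiv (T : ∀ x, peirceComponent e ℳ x ≃+ peirceComponent e 𝒩 x) : M ≃+ N :=
  (peirceEquiv 𝒮 e ℳ).symm.trans ((DirectSum.congrAddEquiv T).trans (peirceEquiv 𝒮 e 𝒩))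

variable (T : ∀ x, peirceComponent e ℳ x ≃+ peirceComponent e 𝒩 x)

theorem glueEquiv_symm : (glueEquiv 𝒮 T).symm = glueEquiv 𝒮 fun x => (T x).symm :=
  rfl

theorem glueEquiv_coe {x : ι × Γ} (m : peirceComponent e ℳ x) : glueEquiv 𝒮 T m = T x m := by
  change peirceEquiv 𝒮 e 𝒩 (DirectSum.map _ ((peirceEquiv 𝒮 e ℳ).symm m)) = _
  rw [peirceEquiv_symm_coe, DirectSum.map_of]
  exact DirectSum.coeAddMonoidHom_of _ _ _

theorem glueEquiv_mem {γ : Γ} {m : M} (hm : m ∈ ℳ γ) : glueEquiv 𝒮 T m ∈ 𝒩 γ := by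
  rw [← sum_idempotent_smul (HomogeneousFrame.complete 𝒮 (e := e)) m, map_sum]
  refine sum_mem fun i _ => ?_
  rw [glueEquiv_coe 𝒮 T ⟨_, idempotent_smul_mem_peirceComponent 𝒮 hm i⟩]
  exact (T (i, γ) _).2.1

theorem image_glueEquiv (γ : Γ) : glueEquiv 𝒮 T '' ℳ γ = 𝒩 γ := by
  refine Set.Subset.antisymm (Set.image_subset_iff.2 fun m => glueEquiv_mem 𝒮 T) fun n hn =>
    ⟨(glueEquiv 𝒮 T).symm n, ?_, AddEquiv.apply_symm_apply _ _⟩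
  rw [glueEquiv_symm]
  exact glueEquiv_mem 𝒮 _ hn

theorem glueEquiv_smul [SetLike.GradedMonoid 𝒮]
    (hT : ∀ x y (a : S) (ha : a ∈ peirceHom 𝒮 e x y) (m : peirceComponent e ℳ x),
      (T y ⟨a • m, smul_mem_peirceComponent ha m.2⟩ : N) = a • (T x m : N)) (s : S) (m : M) :
    glueEquiv 𝒮 T (s • m) = s • glueEquiv 𝒮 T m := by
  have hm : m ∈ ⨆ x, peirceComponent e ℳ x := by
    rw [iSup_peirceComponent 𝒮]
    exact AddSubgroup.mem_top m
  refine AddSubgroup.iSup_induction _ (C := fun m => glueEquiv 𝒮 T (s • m) = s • glueEquiv 𝒮 T m)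
    hm (fun x m hm => ?_) (by simp) fun m n hm hn => by simp only [smul_add, map_add, hm, hn]
  let p : peirceComponent e ℳ x := ⟨m, hm⟩
  have hp : (m, (T x p : N)) ∈ peirceComponent e (fun γ => (ℳ γ).prod (𝒩 γ)) x :=
    ((peirceComponentProdEquiv 𝒮 e ℳ 𝒩 x).symm (p, T x p)).2
  rw [show glueEquiv 𝒮 T m = T x p from glueEquiv_coe 𝒮 T p]
  refine smul_induction_of_mem_peirceComponent (𝒮 := 𝒮) hp (C := fun q => glueEquiv 𝒮 T q.1 = q.2)
    (map_zero _) (fun q q' hq hq' => ?_) (fun y a ha => ?_) s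
  · rw [Prod.fst_add, Prod.snd_add, map_add, hq, hq']
  · exact (glueEquiv_coe 𝒮 T ⟨a • m, smul_mem_peirceComponent ha hm⟩).trans (hT x y a ha p)

omit [DecidableEq ι] in
theorem exists_graded_linearEquiv_of_natural [SetLike.GradedMonoid 𝒮]
    (hT : ∀ x y (a : S) (ha : a ∈ peirceHom 𝒮 e x y) (m : peirceComponent e ℳ x),
      (T y ⟨a • m, smul_mem_peirceComponent ha m.2⟩ : N) = a • (T x m : N)) :
    ∃ φ : M ≃ₗ[S] N, ∀ γ, φ '' ℳ γ = 𝒩 γ := by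
  classical
  exact ⟨{ glueEquiv 𝒮 T with map_smul' := glueEquiv_smul 𝒮 T hT }, image_glueEquiv 𝒮 T⟩

end Glue

section Transport

variable {Γ ι S M N : Type*} [AddCommGroup Γ] [Ring S] [Fintype ι]
  [AddCommGroup M] [Module S M] [AddCommGroup N] [Module S N]
  {𝒮 : Γ → AddSubgroup S} {e : ι → S} {ℳ : Γ → AddSubgroup M} {𝒩 : Γ → AddSubgroup N}
  [SetLike.GradedSMul 𝒮 ℳ] [SetLike.GradedSMul 𝒮 𝒩] {x y r : ι × Γ}

variable (ℳ) in
/-- An isomorphism between the indices `x` and `y` identifies the Peirce components of modules. -/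
def PeirceIso.componentEquiv (u : PeirceIso 𝒮 e x y) :
    peirceComponent e ℳ x ≃+ peirceComponent e ℳ y where
  toFun m := ⟨u.hom • m, smul_mem_peirceComponent u.hom_mem m.2⟩
  invFun m := ⟨u.inv • m, smul_mem_peirceComponent u.inv_mem m.2⟩
  left_inv m := Subtype.ext (by simp only [smul_smul, u.inv_mul_hom, m.2.2])
  right_inv m := Subtype.ext (by simp only [smul_smul, u.hom_mul_inv, m.2.2])
  map_add' _ _ := Subtype.ext (smul_add _ _ _)

variable [SetLike.GradedMonoid 𝒮]

section HomogeneousFrame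

variable [HomogeneousFrame 𝒮 e]

/-- A linear isomorphism of the Peirce components at `r`, transported to the components at `x`. -/
def PeirceIso.conj (u : PeirceIso 𝒮 e r x)
    (f : peirceComponent e ℳ r ≃ₗ[peirceEnd 𝒮 e r] peirceComponent e 𝒩 r) :
    peirceComponent e ℳ x ≃+ peirceComponent e 𝒩 x :=
  (u.componentEquiv ℳ).symm.trans (f.toAddEquiv.trans (u.componentEquiv 𝒩))

theorem PeirceIso.conj_smul {r' : ι × Γ} (h : r = r')
    (u : PeirceIso 𝒮 e r x) (w : PeirceIso 𝒮 e r' y)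
    (f : ∀ r, peirceComponent e ℳ r ≃ₗ[peirceEnd 𝒮 e r] peirceComponent e 𝒩 r)
    {a : S} (ha : a ∈ peirceHom 𝒮 e x y) (m : peirceComponent e ℳ x) :
    (w.conj (f r') ⟨a • m, smul_mem_peirceComponent ha m.2⟩ : N) = a • (u.conj (f r) m : N) := by
  subst h
  let c : peirceEnd 𝒮 e r :=
    ⟨w.inv * (a * u.hom), mul_mem_peirceHom w.inv_mem (mul_mem_peirceHom ha u.hom_mem)⟩
  let p := (u.componentEquiv ℳ).symm m
  have hp : (w.componentEquiv ℳ).symm ⟨a • m, smul_mem_peirceComponent ha m.2⟩ = c • p :=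
    Subtype.ext <| by
      change w.inv • a • (m : M) = (w.inv * (a * u.hom)) • u.inv • (m : M)
      rw [smul_smul, smul_smul, mul_assoc, mul_assoc a, u.hom_mul_inv, ha.2.2]
  calc w.hom • (f r ((w.componentEquiv ℳ).symm ⟨a • m, _⟩) : N)
    _ = w.hom • (c : S) • (f r p : N) := by rw [hp, map_smul]; rfl
    _ = a • u.hom • (f r p : N) := by
      rw [smul_smul, ← mul_assoc, w.hom_mul_inv, ← mul_assoc, ha.2.1, mul_smul]

end HomogeneousFrame

variable (𝒮 e) in
theorem exists_graded_linearEquiv_of_peirceComponent [DecidableEq Γ]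
    [HomogeneousDivisionFrame 𝒮 e] [DirectSum.Decomposition ℳ] [DirectSum.Decomposition 𝒩]
    (h : ∀ x, Nonempty (peirceComponent e ℳ x ≃ₗ[peirceEnd 𝒮 e x] peirceComponent e 𝒩 x)) :
    ∃ φ : M ≃ₗ[S] N, ∀ γ, φ '' ℳ γ = 𝒩 γ := by
  obtain ⟨f⟩ := Classical.nonempty_pi.2 h
  obtain ⟨ρ, hρ, hρ_eq⟩ := exists_peirceIso_representatives 𝒮 e
  obtain ⟨u⟩ := Classical.nonempty_pi.2 hρ
  refine exists_graded_linearEquiv_of_natural 𝒮 (fun x => (u x).conj (f (ρ x)))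
    fun x y a ha m => ?_
  obtain rfl | h0 := eq_or_ne a 0
  · simp only [zero_smul]
    exact congrArg Subtype.val (map_zero ((u y).conj (f (ρ y))))
  · obtain ⟨v, -⟩ := exists_peirceIso_of_ne_zero ha h0
    exact PeirceIso.conj_smul (hρ_eq x y ⟨v⟩) (u x) (u y) f ha m

end Transport

theorem exists_graded_linearEquiv_of_prod {Γ ι S P Q G : Type*} [AddCommGroup Γ] [DecidableEq Γ]
    [Fintype ι] [Ring S]
    [AddCommGroup P] [AddCommGroup Q] [AddCommGroup G] [Module S P] [Module S Q] [Module S G]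
    (𝒮 : Γ → AddSubgroup S) [SetLike.GradedMonoid 𝒮] (e : ι → S) [HomogeneousDivisionFrame 𝒮 e]
    {ℳP : Γ → AddSubgroup P} {ℳQ : Γ → AddSubgroup Q} {ℳG : Γ → AddSubgroup G}
    [SetLike.GradedSMul 𝒮 ℳP] [SetLike.GradedSMul 𝒮 ℳQ] [SetLike.GradedSMul 𝒮 ℳG]
    [DirectSum.Decomposition ℳP] [DirectSum.Decomposition ℳQ] [DirectSum.Decomposition ℳG]
    [Module.Finite S G] (φ : (P × G) ≃ₗ[S] (Q × G))
    (hφ : ∀ γ, φ '' ((ℳP γ).prod (ℳG γ) : AddSubgroup (P × G)) =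
      ((ℳQ γ).prod (ℳG γ) : AddSubgroup (Q × G))) :
    ∃ ψ : P ≃ₗ[S] Q, ∀ γ, ψ '' ℳP γ = ℳQ γ := by
  refine exists_graded_linearEquiv_of_peirceComponent 𝒮 e fun x => ?_
  have := finite_peirceComponent 𝒮 e ℳG x
  exact nonempty_linearEquiv_of_prod_linearEquiv <|
    (peirceComponentProdEquiv 𝒮 e ℳP ℳG x).symm.trans <|
      (peirceComponentCongr 𝒮 e φ hφ x).trans (peirceComponentProdEquiv 𝒮 e ℳQ ℳG x)

section Opposite

variable {Γ ι S : Type*} [AddCommGroup Γ] [Ring S] (𝒮 : Γ → AddSubgroup S)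

/-- The grading of the opposite ring, over which right modules are left modules. -/
def opGrading (γ : Γ) : AddSubgroup Sᵐᵒᵖ :=
  (𝒮 γ).comap (opAddEquiv (α := S)).symm.toAddMonoidHom

instance gradedMonoid_opGrading [SetLike.GradedMonoid 𝒮] : SetLike.GradedMonoid (opGrading 𝒮) where
  one_mem := SetLike.GradedOne.one_mem (A := 𝒮)
  mul_mem γ γ' a b ha hb := by
    rw [add_comm]
    exact SetLike.mul_mem_graded (A := 𝒮) hb ha

instance homogeneousDivisionFrame_opGrading (e : ι → S) [Fintype ι]
    [HomogeneousDivisionFrame 𝒮 e] :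
    HomogeneousDivisionFrame (opGrading 𝒮) fun i => op (e i) where
  complete :=
    have h := HomogeneousFrame.complete 𝒮 (e := e)
    { idem i := congrArg op (h.idem i)
      ortho i j hij := congrArg op (h.ortho hij.symm)
      complete := by rw [← Finset.op_sum, h.complete, op_one] }
  mem_zero := HomogeneousFrame.mem_zero (𝒮 := 𝒮) (e := e)
  iSup_grading := by
    refine (AddSubgroup.eq_top_iff' _).2 fun a => ?_
    have ha : unop a ∈ ⨆ γ, 𝒮 γ := by
      rw [HomogeneousFrame.iSup_grading e]
      exact AddSubgroup.mem_top _
    exact AddSubgroup.iSup_induction 𝒮 (C := fun s => op s ∈ ⨆ γ, opGrading 𝒮 γ) ha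
      (fun γ s hs => AddSubgroup.mem_iSup_of_mem γ hs) (zero_mem _) fun s t hs ht => add_mem hs ht
  ne_zero i h := HomogeneousDivisionFrame.ne_zero 𝒮 i (op_injective h)
  exists_inverse {γ i j a} ha hja hai h0 := by
    obtain ⟨b, hb, hba, hab⟩ := HomogeneousDivisionFrame.exists_inverse (𝒮 := 𝒮) (e := e)
      ha (congrArg unop hai) (congrArg unop hja) fun h => h0 (unop_injective h)
    exact ⟨op b, hb, congrArg op hab, congrArg op hba⟩

variable {𝒮} in
theorem gradedSMul_opGrading {M : Type*} [AddCommGroup M] [Module Sᵐᵒᵖ M] {ℳ : Γ → AddSubgroup M}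
    (h : ∀ (γ lam : Γ) (x : M) (a : S), x ∈ ℳ γ → a ∈ 𝒮 lam → op a • x ∈ ℳ (γ + lam)) :
    SetLike.GradedSMul (opGrading 𝒮) ℳ where
  smul_mem lam γ a x ha hx := by
    rw [vadd_eq_add, add_comm]
    exact h γ lam x (unop a) hx ha

end Opposite

section Matricial

variable {Γ : Type*} [AddCommGroup Γ] {A : Type*} [Ring A] {l : ℕ} {n : Fin l → ℕ}

theorem units_inv_mem_graded [DecidableEq Γ] (𝒜 : Γ → AddSubgroup A) [GradedRing 𝒜] {γ : Γ}
    {u : Aˣ} (hu : (u : A) ∈ 𝒜 γ) : (↑u⁻¹ : A) ∈ 𝒜 (-γ) := by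
  have h : (u : A) * DirectSum.decompose 𝒜 (↑u⁻¹ : A) (-γ) = 1 := by
    rw [← DirectSum.coe_decompose_mul_add_of_left_mem 𝒜 hu, u.mul_inv, add_neg_cancel]
    exact DirectSum.decompose_of_mem_same 𝒜 SetLike.GradedOne.one_mem
  rw [Units.inv_eq_of_mul_eq_one_right h]
  exact SetLike.coe_mem _

variable (A n) in
/-- The diagonal element of a product of matrix rings with given diagonal entries. The pair `⟨s, i⟩`
indexes the `i`-th diagonal entry of the `s`-th factor. -/
def matricialDiagonal : ((Σ s, Fin (n s)) → A) →+* MatricialAlg A n :=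
  RingHom.pi fun s => (Matrix.diagonalRingHom (Fin (n s)) A).comp
    (RingHom.pi fun i => Pi.evalRingHom _ ⟨s, i⟩)

theorem matricialDiagonal_apply (d : (Σ s, Fin (n s)) → A) (s : Fin l) :
    matricialDiagonal A n d s = Matrix.diagonal fun i => d ⟨s, i⟩ := rfl

theorem matricialDiagonal_mul_apply (d : (Σ s, Fin (n s)) → A) (a : MatricialAlg A n) (s : Fin l)
    (i j : Fin (n s)) : (matricialDiagonal A n d * a) s i j = d ⟨s, i⟩ * a s i j :=
  Matrix.diagonal_mul _ _ _ _

theorem mul_matricialDiagonal_apply (d : (Σ s, Fin (n s)) → A) (a : MatricialAlg A n) (s : Fin l)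
    (i j : Fin (n s)) : (a * matricialDiagonal A n d) s i j = a s i j * d ⟨s, j⟩ :=
  Matrix.mul_diagonal _ _ _ _

variable (A) in
/-- The diagonal matrix unit `E_ii` of the `s`-th factor, for the index `⟨s, i⟩`. -/
def diagonalUnit (i : Σ s, Fin (n s)) : MatricialAlg A n :=
  matricialDiagonal A n (Pi.single i 1)

theorem diagonalUnit_mk (s : Fin l) (i : Fin (n s)) :
    diagonalUnit A ⟨s, i⟩ = Pi.single s (Matrix.single i i 1) := by
  funext t
  ext j k
  rw [diagonalUnit, matricialDiagonal_apply, Matrix.diagonal_apply]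
  obtain rfl | hts := eq_or_ne t s
  · simp only [Pi.single_apply, Matrix.single_apply, Pi.single_eq_same, Sigma.mk.injEq, heq_eq_eq,
      true_and]
    grind
  · simp [Pi.single_eq_of_ne, hts]

theorem eq_single_of_diagonalUnit_mul {a : MatricialAlg A n} {i j : Σ s, Fin (n s)}
    (hj : diagonalUnit A j * a = a) (hi : a * diagonalUnit A i = a) (h0 : a ≠ 0) :
    ∃ s p q, j = ⟨s, p⟩ ∧ i = ⟨s, q⟩ ∧ a = Pi.single s (Matrix.single p q (a s p q)) := by
  have eq_of_ne_zero {s : Fin l} {p q : Fin (n s)} (h : a s p q ≠ 0) :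
      j = ⟨s, p⟩ ∧ i = ⟨s, q⟩ := by
    constructor <;> by_contra hne <;> apply h
    · rw [← hj, diagonalUnit, matricialDiagonal_mul_apply, Pi.single_eq_of_ne' hne, zero_mul]
    · rw [← hi, diagonalUnit, mul_matricialDiagonal_apply, Pi.single_eq_of_ne' hne, mul_zero]
  obtain ⟨s, p, q, h⟩ : ∃ s p q, a s p q ≠ 0 := by
    by_contra! h
    exact h0 (funext fun s => Matrix.ext (h s))
  obtain ⟨rfl, rfl⟩ := eq_of_ne_zero h
  refine ⟨s, p, q, rfl, rfl, funext fun t => Matrix.ext fun p' q' => ?_⟩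
  by_cases ht : a t p' q' = 0
  · rw [ht]
    obtain rfl | hts := eq_or_ne t s
    · rw [Pi.single_eq_same, Matrix.single_apply]
      split_ifs with hpq
      · obtain ⟨rfl, rfl⟩ := hpq
        exact ht.symm
      · rfl
    · rw [Pi.single_eq_of_ne hts, Matrix.zero_apply]
  · obtain ⟨h1, h2⟩ := eq_of_ne_zero ht
    cases h1
    cases h2
    simp

theorem sum_single_single (a : MatricialAlg A n) :
    ∑ s, ∑ i, ∑ j, Pi.single s (Matrix.single i j (a s i j)) = a := by
  conv_rhs => rw [← Finset.univ_sum_single a]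
  refine Finset.sum_congr rfl fun s _ => ?_
  conv_rhs => rw [Matrix.matrix_eq_sum_single (a s)]
  simp only [← AddMonoidHom.single_apply, map_sum]

theorem single_mem_matricialGrading {𝒜 : Γ → AddSubgroup A} {δ : ∀ s : Fin l, Fin (n s) → Γ}
    {s : Fin l} {i j : Fin (n s)} {γ : Γ} {a : A} (ha : a ∈ 𝒜 (γ + δ s j - δ s i)) :
    Pi.single s (Matrix.single i j a) ∈ matricialGrading 𝒜 δ γ := by
  intro t p q
  by_cases ht : t = s
  · subst ht
    rw [Pi.single_eq_same, Matrix.single_apply]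
    split_ifs with h
    · obtain ⟨rfl, rfl⟩ := h
      exact ha
    · exact zero_mem _
  · rw [Pi.single_eq_of_ne ht]
    exact zero_mem _

variable [DecidableEq Γ] (𝒜 : Γ → AddSubgroup A) [GradedRing 𝒜] (δ : ∀ s : Fin l, Fin (n s) → Γ)

instance gradedMonoid_matricialGrading : SetLike.GradedMonoid (matricialGrading 𝒜 δ) where
  one_mem s i j := by
    rw [Pi.one_apply, Matrix.one_apply]
    split_ifs with h
    · simpa [h] using SetLike.GradedOne.one_mem (A := 𝒜)
    · exact zero_mem _
  mul_mem γ γ' a b ha hb s i j := by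
    rw [Pi.mul_apply, Matrix.mul_apply]
    refine sum_mem fun k _ => ?_
    convert SetLike.mul_mem_graded (ha s i k) (hb s k j) using 2
    abel

theorem iSup_matricialGrading : ⨆ γ, matricialGrading 𝒜 δ γ = ⊤ := by
  have single_mem (s : Fin l) (i j : Fin (n s)) (a : A) :
      (Pi.single s (Matrix.single i j a) : MatricialAlg A n) ∈ ⨆ γ, matricialGrading 𝒜 δ γ := by
    induction a using DirectSum.Decomposition.inductionOn 𝒜 with
    | zero => simp
    | add a b ha hb => simpa only [Matrix.single_add, Pi.single_add] using add_mem ha hb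
    | @homogeneous γ a =>
      refine AddSubgroup.mem_iSup_of_mem (γ + δ s i - δ s j) (single_mem_matricialGrading ?_)
      simp
  refine (AddSubgroup.eq_top_iff' _).2 fun a => ?_
  rw [← sum_single_single a]
  exact sum_mem fun s _ => sum_mem fun i _ => sum_mem fun j _ => single_mem s i j _

theorem homogeneousDivisionFrame_matricialGrading [Nontrivial A]
    (hA : ∀ (γ : Γ) (a : A), a ∈ 𝒜 γ → a ≠ 0 → IsUnit a) :
    HomogeneousDivisionFrame (matricialGrading 𝒜 δ) (diagonalUnit A) where
  complete := (CompleteOrthogonalIdempotents.single fun _ => A).map (matricialDiagonal A n)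
  mem_zero i := by
    rw [diagonalUnit_mk]
    apply single_mem_matricialGrading
    simpa using SetLike.GradedOne.one_mem (A := 𝒜)
  iSup_grading := iSup_matricialGrading 𝒜 δ
  ne_zero i h := by
    obtain ⟨s, j⟩ := i
    rw [diagonalUnit_mk] at h
    simpa using congrFun (congrFun (congrFun h s) j) j
  exists_inverse {γ i j a} ha hja hai h0 := by
    obtain ⟨s, p, q, rfl, rfl, hs⟩ := eq_single_of_diagonalUnit_mul hja hai h0
    have hne : a s p q ≠ 0 := fun h => h0 (by rw [hs, h, Matrix.single_zero, Pi.single_zero])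
    obtain ⟨u, hu⟩ := hA _ _ (ha s p q) hne
    rw [← hu] at hs
    refine ⟨Pi.single s (Matrix.single q p ↑u⁻¹), single_mem_matricialGrading ?_, ?_, ?_⟩
    · convert units_inv_mem_graded 𝒜 (hu ▸ ha s p q) using 2
      abel
    · rw [hs, ← Pi.single_mul, Matrix.single_mul_single_same, u.inv_mul, diagonalUnit_mk]
    · rw [hs, ← Pi.single_mul, Matrix.single_mul_single_same, u.mul_inv, diagonalUnit_mk]

end Matricial

theorem graded_matricial_cancellation_general
    {Γ : Type*} [AddCommGroup Γ] [DecidableEq Γ]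
    {A : Type*} [Ring A] [Nontrivial A]
    (𝒜 : Γ → AddSubgroup A) [GradedRing 𝒜]
    (hfield : ∀ (γ : Γ) (a : A), a ∈ 𝒜 γ → a ≠ 0 → IsUnit a)
    {l : ℕ} {n : Fin l → ℕ} (δ : ∀ s : Fin l, Fin (n s) → Γ)
    {P Q G : Type*} [AddCommGroup P] [AddCommGroup Q] [AddCommGroup G]
    [Module (MatricialAlg A n)ᵐᵒᵖ P] [Module (MatricialAlg A n)ᵐᵒᵖ Q]
    [Module (MatricialAlg A n)ᵐᵒᵖ G]
    (ℳP : Γ → AddSubgroup P) (ℳQ : Γ → AddSubgroup Q) (ℳG : Γ → AddSubgroup G)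
    [DirectSum.Decomposition ℳP] [DirectSum.Decomposition ℳQ]
    [DirectSum.Decomposition ℳG]
    (hP : ∀ (γ lam : Γ) (x : P) (a : MatricialAlg A n),
      x ∈ ℳP γ → a ∈ matricialGrading 𝒜 δ lam → (op a) • x ∈ ℳP (γ + lam))
    (hQ : ∀ (γ lam : Γ) (x : Q) (a : MatricialAlg A n),
      x ∈ ℳQ γ → a ∈ matricialGrading 𝒜 δ lam → (op a) • x ∈ ℳQ (γ + lam))
    (hG : ∀ (γ lam : Γ) (x : G) (a : MatricialAlg A n),
      x ∈ ℳG γ → a ∈ matricialGrading 𝒜 δ lam → (op a) • x ∈ ℳG (γ + lam))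
    [Module.Finite (MatricialAlg A n)ᵐᵒᵖ G]
    (hiso : ∃ e : (P × G) ≃ₗ[(MatricialAlg A n)ᵐᵒᵖ] (Q × G),
      ∀ γ : Γ, (⇑e) '' (((ℳP γ).prod (ℳG γ) : AddSubgroup (P × G)) : Set (P × G)) =
        (((ℳQ γ).prod (ℳG γ) : AddSubgroup (Q × G)) : Set (Q × G))) :
    ∃ e : P ≃ₗ[(MatricialAlg A n)ᵐᵒᵖ] Q,
      ∀ γ : Γ, (⇑e) '' ((ℳP γ : AddSubgroup P) : Set P) = ((ℳQ γ : AddSubgroup Q) : Set Q) := by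
  have := homogeneousDivisionFrame_matricialGrading 𝒜 δ hfield
  have := gradedSMul_opGrading hP
  have := gradedSMul_opGrading hQ
  have := gradedSMul_opGrading hG
  obtain ⟨φ, hφ⟩ := hiso
  exact exists_graded_linearEquiv_of_prod (opGrading (matricialGrading 𝒜 δ))
    (fun i => op (diagonalUnit A i)) φ hφ

theorem graded_matricial_cancellation
    {Γ : Type*} [AddCommGroup Γ] [DecidableEq Γ]
    {A : Type*} [CommRing A] [Nontrivial A]
    (𝒜 : Γ → AddSubgroup A) [GradedRing 𝒜]
    (hfield : ∀ (γ : Γ) (a : A), a ∈ 𝒜 γ → a ≠ 0 → IsUnit a)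
    {l : ℕ} {n : Fin l → ℕ} (δ : ∀ s : Fin l, Fin (n s) → Γ)
    {P Q G : Type*} [AddCommGroup P] [AddCommGroup Q] [AddCommGroup G]
    [Module (MatricialAlg A n)ᵐᵒᵖ P] [Module (MatricialAlg A n)ᵐᵒᵖ Q]
    [Module (MatricialAlg A n)ᵐᵒᵖ G]
    (ℳP : Γ → AddSubgroup P) (ℳQ : Γ → AddSubgroup Q) (ℳG : Γ → AddSubgroup G)
    [DirectSum.Decomposition ℳP] [DirectSum.Decomposition ℳQ]
    [DirectSum.Decomposition ℳG]
    (hP : ∀ (γ lam : Γ) (x : P) (a : MatricialAlg A n),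
      x ∈ ℳP γ → a ∈ matricialGrading 𝒜 δ lam → (op a) • x ∈ ℳP (γ + lam))
    (hQ : ∀ (γ lam : Γ) (x : Q) (a : MatricialAlg A n),
      x ∈ ℳQ γ → a ∈ matricialGrading 𝒜 δ lam → (op a) • x ∈ ℳQ (γ + lam))
    (hG : ∀ (γ lam : Γ) (x : G) (a : MatricialAlg A n),
      x ∈ ℳG γ → a ∈ matricialGrading 𝒜 δ lam → (op a) • x ∈ ℳG (γ + lam))
    [Module.Finite (MatricialAlg A n)ᵐᵒᵖ P] [Module.Projective (MatricialAlg A n)ᵐᵒᵖ P]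
    [Module.Finite (MatricialAlg A n)ᵐᵒᵖ Q] [Module.Projective (MatricialAlg A n)ᵐᵒᵖ Q]
    [Module.Finite (MatricialAlg A n)ᵐᵒᵖ G] [Module.Projective (MatricialAlg A n)ᵐᵒᵖ G]
    (hiso : ∃ e : (P × G) ≃ₗ[(MatricialAlg A n)ᵐᵒᵖ] (Q × G),
      ∀ γ : Γ, (⇑e) '' (((ℳP γ).prod (ℳG γ) : AddSubgroup (P × G)) : Set (P × G)) =
        (((ℳQ γ).prod (ℳG γ) : AddSubgroup (Q × G)) : Set (Q × G))) :
    ∃ e : P ≃ₗ[(MatricialAlg A n)ᵐᵒᵖ] Q,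
      ∀ γ : Γ, (⇑e) '' ((ℳP γ : AddSubgroup P) : Set P) = ((ℳQ γ : AddSubgroup Q) : Set Q) := by
  exact graded_matricial_cancellation_general 𝒜 hfield δ ℳP ℳQ ℳG hP hQ hG hiso
end
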